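/- Let D be a nontrivial regular (v,k,λ,μ)-partial difference set in a finite abelian group G of order v, and set Δ = (λ−μ)² + 4(k−μ). Then Δ divides v², and the three integers v, Δ, and v²/Δ have exactly the same prime divisors: for every prime p, p ∣ v ⇔ p ∣ Δ ⇔ p ∣ v²/Δ. -/

import Mathlib

/-- `D` is a `(v,k,λ,μ)` partial difference set in the group `G` (written
multiplicatively): `|G| = v`, `|D| = k`, every non-identity element of `D` is represented
exactly `lam` times as `g * h⁻¹` with `g, h ∈ D`, `g ≠ h`, and every non-identity element
of `G` not in `D` exactly `mu` times. -/
def IsPDS {G : Type*} [Group G] (D : Set G) (v k lam mu : ℕ) : Prop :=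
  Nat.card G = v ∧ D.ncard = k ∧
  (∀ z : G, z ≠ 1 → z ∈ D →
    {p : G × G | p.1 ∈ D ∧ p.2 ∈ D ∧ p.1 ≠ p.2 ∧ p.1 * p.2⁻¹ = z}.ncard = lam) ∧
  (∀ z : G, z ≠ 1 → z ∉ D →
    {p : G × G | p.1 ∈ D ∧ p.2 ∈ D ∧ p.1 ≠ p.2 ∧ p.1 * p.2⁻¹ = z}.ncard = mu)

/-- `D` is regular: it avoids the identity and is closed under inversion. -/
def IsRegularPDS {G : Type*} [Group G] (D : Set G) : Prop :=
  (1 : G) ∉ D ∧ ∀ g ∈ D, g⁻¹ ∈ D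

/-- `D` is a trivial PDS: `D ∪ {1}` or `G \ D` is a subgroup of `G`. -/
def IsTrivialPDS {G : Type*} [Group G] (D : Set G) : Prop :=
  (∃ H : Subgroup G, D ∪ {1} = (H : Set G)) ∨ ∃ H : Subgroup G, Dᶜ = (H : Set G)

/-!
Let `s ^ 2 = Δ`. The sums `χ(D)` over nontrivial characters `χ` are roots of one quadratic
polynomial, so they take only two values `t` and `t + s`; let `D*` be the set of the `χ ≠ 1` with
`χ(D) = t + s`. Both implications from `v` use that if `ζ ^ p = 1`, then `ζ ≡ 1` modulo every prime
ideal above `p`, so an integer of the form `(∑ i, (ζ i - 1) * y i) ^ 2` with algebraic integers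
`y i` is divisible by `p`.

* If `χ` has order `p`, then nontriviality of `D` gives a `ψ` with `(χψ)(D) - ψ(D) = ± s`, and so
  `Δ = (∑ g ∈ D, (χ(g) - 1) ψ(g)) ^ 2`.
* If `x` has order `p`, then nontriviality of `D` gives a `y` for which Fourier inversion yields
  `v ^ 2 = Δ (∑ χ ∈ D*, (χ(x) - 1) χ(y)) ^ 2`. Hence the square is the rational algebraic integer
  `v ^ 2 / Δ`.
-/

open Finset

theorem sub_one_mem_of_pow_prime_eq_one {R : Type*} [CommRing R] {P : Ideal R} [P.IsPrime]
    {p : ℕ} (hp : p.Prime) (hpP : (p : R) ∈ P) {ζ : R} (hζ : ζ ^ p = 1) : ζ - 1 ∈ P := by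
  obtain ⟨r, hr⟩ := exists_add_pow_prime_eq hp (ζ - 1) 1
  refine Ideal.IsPrime.mem_of_pow_mem ‹_› p ?_
  have hmul : (ζ - 1) ^ p = -((ζ - 1) * r) * p := by
    rw [sub_add_cancel, hζ, one_pow] at hr
    linear_combination -hr
  exact hmul ▸ P.mul_mem_left _ hpP

theorem natCast_dvd_of_sum_sub_one_mul_pow_eq {A ι : Type*} [CommRing A] [CharZero A] {p m : ℕ}
    (hp : p.Prime) (hm : m ≠ 0) {s : Finset ι} {ζ y : ι → A} (hζ : ∀ i, ζ i ^ p = 1)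
    (hy : ∀ i, IsIntegral ℤ (y i)) {N : ℤ} (hN : (∑ i ∈ s, (ζ i - 1) * y i) ^ m = N) :
    (p : ℤ) ∣ N := by
  let R := integralClosure ℤ A
  have : (Ideal.span {(p : ℤ)}).IsMaximal :=
    PrincipalIdealRing.isMaximal_of_irreducible (Nat.prime_iff_prime_int.mp hp).irreducible
  obtain ⟨P, hP, ⟨hover⟩⟩ :=
    Ideal.exists_maximal_ideal_liesOver_of_isIntegral (S := R) (Ideal.span {(p : ℤ)})
  have mem_P_iff (n : ℤ) : (n : R) ∈ P ↔ (p : ℤ) ∣ n := by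
    rw [← Ideal.mem_span_singleton, hover, Ideal.under_def, Ideal.mem_comap, eq_intCast]
  let ζ' (i : ι) : R := ⟨ζ i, .of_pow hp.pos (by rw [hζ]; exact isIntegral_one)⟩
  let y' (i : ι) : R := ⟨y i, hy i⟩
  have hN' : (∑ i ∈ s, (ζ' i - 1) * y' i) ^ m = (N : R) :=
    Subtype.ext (by simpa [ζ', y'] using hN)
  rw [← mem_P_iff, ← hN']
  refine P.pow_mem_of_mem (sum_mem fun i _ ↦ P.mul_mem_right _ ?_) m hm.bot_lt
  have hpP : (p : R) ∈ P := by simpa using (mem_P_iff p).mpr dvd_rfl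
  exact sub_one_mem_of_pow_prime_eq_one hp hpP (Subtype.ext (hζ i))

theorem exists_intCast_eq_of_eq_mul {K : Type*} [Field K] [CharZero K] {a b : ℤ} {z : K}
    (hb : b ≠ 0) (h : (b : K) = a * z) (hz : IsIntegral ℤ z) : ∃ n : ℤ, (n : K) = z := by
  have ha : (a : K) ≠ 0 := left_ne_zero_of_mul (h ▸ Int.cast_ne_zero.mpr hb)
  have hrat : z = ((b / a : ℚ) : K) := by
    push_cast
    rw [h, mul_div_cancel_left₀ _ ha]
  obtain ⟨n, hn⟩ := (IsIntegral.exists_int_iff_exists_rat hz).mp ⟨_, hrat⟩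
  exact ⟨n, hn.symm⟩

namespace IsRegularPDS

variable {G : Type*} [Group G] {D : Set G}

theorem inv_mem_iff (hreg : IsRegularPDS D) {g : G} : g⁻¹ ∈ D ↔ g ∈ D :=
  ⟨fun h ↦ inv_inv g ▸ hreg.2 _ h, hreg.2 g⟩

theorem ne_one (hreg : IsRegularPDS D) {g : G} (hg : g ∈ D) : g ≠ 1 :=
  fun h ↦ hreg.1 (h ▸ hg)

theorem isTrivialPDS_of_forall_mul_mem (hreg : IsRegularPDS D)
    (h : ∀ a ∈ D, ∀ b ∈ D, a * b ≠ 1 → a * b ∈ D) : IsTrivialPDS D := by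
  refine .inl ⟨{ carrier := D ∪ {1}, mul_mem' := ?_, one_mem' := .inr rfl, inv_mem' := ?_ }, rfl⟩
  · rintro a b (ha | rfl) (hb | rfl)
    · exact (em (a * b = 1)).elim .inr fun hab ↦ .inl (h a ha b hb hab)
    all_goals simp_all
  · rintro a (ha | rfl)
    · exact .inl (hreg.2 a ha)
    · simp

theorem isTrivialPDS_of_forall_mul_notMem (hreg : IsRegularPDS D)
    (h : ∀ a ∉ D, ∀ b ∉ D, a * b ∉ D) : IsTrivialPDS D :=
  .inr ⟨{ carrier := Dᶜ, mul_mem' := fun ha hb ↦ h _ ha _ hb, one_mem' := hreg.1,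
          inv_mem' := fun ha ↦ hreg.inv_mem_iff.not.mpr ha }, rfl⟩

theorem nontrivial_of_not_isTrivialPDS (hreg : IsRegularPDS D) (hnt : ¬ IsTrivialPDS D) :
    Nontrivial G := by
  by_contra hG
  have := not_nontrivial_iff_subsingleton.mp hG
  exact hnt <| hreg.isTrivialPDS_of_forall_mul_mem
    fun a _ b _ hab ↦ absurd (Subsingleton.elim _ _) hab

end IsRegularPDS

theorem ncard_setOf_mul_inv_eq {G : Type*} [Group G] (D : Set G) {z : G} (hz : z ≠ 1) :
    {p : G × G | p.1 ∈ D ∧ p.2 ∈ D ∧ p.1 ≠ p.2 ∧ p.1 * p.2⁻¹ = z}.ncard =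
      (D ∩ (z * ·) ⁻¹' D).ncard := by
  refine Set.ncard_congr (fun p _ ↦ p.2) ?_ ?_ ?_
  · rintro ⟨g, h⟩ ⟨hg, hh, -, rfl⟩
    exact ⟨hh, by simpa using hg⟩
  · rintro ⟨g, h⟩ ⟨g', _⟩ ⟨-, -, -, hg⟩ ⟨-, -, -, hg'⟩ rfl
    exact Prod.ext (mul_right_cancel (hg.trans hg'.symm)) rfl
  · intro h hh
    exact ⟨(z * h, h), ⟨hh.2, hh.1, by simpa using hz, by simp⟩, rfl⟩

namespace IsPDS

section Nontriviality

variable {G : Type*} [Group G] {D : Set G} {v k lam mu : ℕ}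

theorem ncard_inter_preimage_congr (hpds : IsPDS D v k lam mu) {a b : G} (ha : a ≠ 1)
    (hb : b ≠ 1) (hab : a ∈ D ↔ b ∈ D) :
    (D ∩ (a * ·) ⁻¹' D).ncard = (D ∩ (b * ·) ⁻¹' D).ncard := by
  obtain ⟨-, -, hlam, hmu⟩ := hpds
  rw [← ncard_setOf_mul_inv_eq D ha, ← ncard_setOf_mul_inv_eq D hb]
  by_cases haD : a ∈ D
  · rw [hlam a ha haD, hlam b hb (hab.mp haD)]
  · rw [hmu a ha haD, hmu b hb (hab.not.mp haD)]

variable [Finite G]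

theorem ncard_union_preimage_congr (hpds : IsPDS D v k lam mu) {a b : G} (ha : a ≠ 1)
    (hb : b ≠ 1) (hab : a ∈ D ↔ b ∈ D) :
    (D ∪ (a * ·) ⁻¹' D).ncard = (D ∪ (b * ·) ⁻¹' D).ncard := by
  have ncard_preimage (g : G) : ((g * ·) ⁻¹' D).ncard = D.ncard :=
    Set.ncard_preimage_of_injective_subset_range (mul_right_injective g)
      fun d _ ↦ ⟨g⁻¹ * d, by simp⟩
  have hinter := hpds.ncard_inter_preimage_congr ha hb hab
  have hsum_a := Set.ncard_union_add_ncard_inter D ((a * ·) ⁻¹' D)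
  have hsum_b := Set.ncard_union_add_ncard_inter D ((b * ·) ⁻¹' D)
  rw [ncard_preimage] at hsum_a hsum_b
  omega

theorem isTrivialPDS_of_sdiff_subset_preimage (hpds : IsPDS D v k lam mu)
    (hreg : IsRegularPDS D) {x : G} (hx : x ∈ D) (hxD : D \ {x⁻¹} ⊆ (x * ·) ⁻¹' D) :
    IsTrivialPDS D := by
  refine hreg.isTrivialPDS_of_forall_mul_mem fun a ha b hb hab ↦ ?_
  have hsub : D ∩ (a * ·) ⁻¹' D ⊆ D \ {a⁻¹} := by
    rintro h ⟨hh, hah⟩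
    exact ⟨hh, by rintro rfl; exact hreg.1 (by simpa using hah)⟩
  have hcard : (D \ {a⁻¹}).ncard ≤ (D ∩ (a * ·) ⁻¹' D).ncard := by
    rw [hpds.ncard_inter_preimage_congr (hreg.ne_one ha) (hreg.ne_one hx) (iff_of_true ha hx),
      Set.ncard_sdiff_singleton_of_mem (hreg.2 a ha),
      ← Set.ncard_sdiff_singleton_of_mem (hreg.2 x hx)]
    exact Set.ncard_le_ncard (Set.subset_inter Set.sdiff_subset hxD)
  have heq := Set.eq_of_subset_of_ncard_le hsub hcard
  exact (heq.ge ⟨hb, fun h ↦ hab (by simp [Set.mem_singleton_iff.mp h])⟩).2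

theorem isTrivialPDS_of_subset_preimage (hpds : IsPDS D v k lam mu) (hreg : IsRegularPDS D)
    {x : G} (hx : x ∉ D) (hx1 : x ≠ 1) (hxD : D ⊆ (x * ·) ⁻¹' D) : IsTrivialPDS D := by
  have mul_mem (a : G) (ha : a ∉ D) (h : G) (hh : h ∈ D) : a * h ∈ D := by
    rcases eq_or_ne a 1 with rfl | ha1
    · simpa using hh
    · have hcard : D.ncard ≤ (D ∩ (a * ·) ⁻¹' D).ncard := by
        rw [hpds.ncard_inter_preimage_congr ha1 hx1 (iff_of_false ha hx),
          Set.inter_eq_left.mpr hxD]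
      exact ((Set.eq_of_subset_of_ncard_le Set.inter_subset_left hcard).ge hh).2
  refine hreg.isTrivialPDS_of_forall_mul_notMem fun a ha b hb hab ↦ hb ?_
  simpa using mul_mem a⁻¹ (hreg.inv_mem_iff.not.mpr ha) _ hab

theorem exists_mem_mul_notMem (hpds : IsPDS D v k lam mu) (hreg : IsRegularPDS D)
    (hnt : ¬ IsTrivialPDS D) {x : G} (hx : x ≠ 1) : ∃ y ∈ D, x * y ≠ 1 ∧ x * y ∉ D := by
  contrapose! hnt
  by_cases hxD : x ∈ D
  · refine hpds.isTrivialPDS_of_sdiff_subset_preimage hreg hxD fun y hy ↦ hnt y hy.1 fun hxy ↦ ?_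
    exact hy.2 (eq_inv_of_mul_eq_one_right hxy)
  · refine hpds.isTrivialPDS_of_subset_preimage hreg hxD hx fun y hy ↦ hnt y hy fun hxy ↦ ?_
    exact hxD (eq_inv_of_mul_eq_one_left hxy ▸ hreg.2 y hy)

theorem isTrivialPDS_of_subset_subgroup (hpds : IsPDS D v k lam mu) (hreg : IsRegularPDS D)
    {K : Subgroup G} (hK : K ≠ ⊤) (hDK : D ⊆ K) : IsTrivialPDS D := by
  obtain ⟨x, hx⟩ := SetLike.exists_not_mem_of_ne_top K hK rfl
  have hxD : x ∉ D := fun h ↦ hx (hDK h)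
  have hx1 : x ≠ 1 := fun h ↦ hx (h ▸ K.one_mem)
  have hempty : D ∩ (x * ·) ⁻¹' D = ∅ := Set.eq_empty_of_forall_notMem
    fun h hh ↦ hx ((K.mul_mem_cancel_right (hDK hh.1)).mp (hDK hh.2))
  refine hreg.isTrivialPDS_of_forall_mul_mem fun a ha b hb hab ↦ by_contra fun habD ↦ ?_
  have hcard := hpds.ncard_inter_preimage_congr hab hx1 (iff_of_false habD hxD)
  rw [hempty, Set.ncard_empty, Set.ncard_eq_zero] at hcard
  exact hcard.le ⟨hreg.2 b hb, by simpa using ha⟩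

theorem isTrivialPDS_of_compl_subset_subgroup (hpds : IsPDS D v k lam mu)
    (hreg : IsRegularPDS D) {K : Subgroup G} (hK : K ≠ ⊤) (hDK : Dᶜ ⊆ K) : IsTrivialPDS D := by
  obtain ⟨x, hx⟩ := SetLike.exists_not_mem_of_ne_top K hK rfl
  have hxD : x ∈ D := by_contra fun h ↦ hx (hDK h)
  have huniv : D ∪ (x * ·) ⁻¹' D = Set.univ := Set.eq_univ_of_forall fun h ↦ by
    by_contra! hh
    rw [Set.mem_union, not_or] at hh
    exact hx ((K.mul_mem_cancel_right (hDK hh.1)).mp (hDK hh.2))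
  refine hreg.isTrivialPDS_of_forall_mul_notMem fun a ha b hb hab ↦ ?_
  have hcard := hpds.ncard_union_preimage_congr (hreg.ne_one hab) (hreg.ne_one hxD)
    (iff_of_true hab hxD)
  rw [huniv, Set.ncard_univ, ← Set.eq_univ_iff_ncard] at hcard
  rcases hcard.ge (Set.mem_univ b⁻¹) with hb' | hab'
  · exact hb (hreg.inv_mem_iff.mp hb')
  · exact ha (by simpa using hab')

theorem exists_mem_apply_ne_one (hpds : IsPDS D v k lam mu) (hreg : IsRegularPDS D)
    (hnt : ¬ IsTrivialPDS D) {M : Type*} [MulOneClass M] {φ : G →* M} (hφ : φ ≠ 1) :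
    ∃ g ∈ D, φ g ≠ 1 := by
  contrapose! hnt
  exact hpds.isTrivialPDS_of_subset_subgroup hreg (MonoidHom.ker_eq_top_iff.not.mpr hφ) hnt

theorem exists_notMem_apply_ne_one (hpds : IsPDS D v k lam mu) (hreg : IsRegularPDS D)
    (hnt : ¬ IsTrivialPDS D) {M : Type*} [MulOneClass M] {φ : G →* M} (hφ : φ ≠ 1) :
    ∃ g ∉ D, φ g ≠ 1 := by
  contrapose! hnt
  exact hpds.isTrivialPDS_of_compl_subset_subgroup hreg (MonoidHom.ker_eq_top_iff.not.mpr hφ) hnt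

end Nontriviality

end IsPDS

section CharacterSums

theorem isIntegral_addChar_apply {A R : Type*} [AddGroup A] [Finite A] [CommRing R]
    (χ : AddChar A R) (a : A) : IsIntegral ℤ (χ a) := by
  refine .of_pow (Nat.card_pos (α := A)) ?_
  rw [← AddChar.map_nsmul_eq_pow, card_nsmul_eq_zero', AddChar.map_zero_eq_one]
  exact isIntegral_one

variable {G : Type*} [CommGroup G]

/-- The character sum `χ(D)`, that is, the eigenvalue of the Cayley graph of `D` belonging to
`χ`. -/
noncomputable def charSum (D : Finset G) (χ : AddChar (Additive G) ℂ) : ℂ :=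
  ∑ g ∈ D, χ (.ofMul g)

theorem charSum_zero (D : Finset G) : charSum D 0 = #D := by
  simp [charSum]

theorem charSum_neg {D : Finset G} (hD : ∀ g ∈ D, g⁻¹ ∈ D) (χ : AddChar (Additive G) ℂ) :
    charSum D (-χ) = charSum D χ :=
  sum_nbij' (·⁻¹) (·⁻¹) hD hD (by simp) (by simp) (by simp)

theorem charSum_add_sub (D : Finset G) (χ ψ : AddChar (Additive G) ℂ) :
    charSum D (χ + ψ) - charSum D ψ = ∑ g ∈ D, (χ (.ofMul g) - 1) * ψ (.ofMul g) := by
  simp only [charSum, ← sum_sub_distrib, AddChar.add_apply, sub_mul, one_mul]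

theorem sum_charSum_mul_apply_inv [Fintype G] [DecidableEq G] (D : Finset G) (h : G) :
    ∑ χ, charSum D χ * χ (.ofMul h⁻¹) = if h ∈ D then (Fintype.card G : ℂ) else 0 := by
  have hχ (χ : AddChar (Additive G) ℂ) :
      charSum D χ * χ (.ofMul h⁻¹) = ∑ g ∈ D, χ (.ofMul (g * h⁻¹)) := by
    simp only [charSum, sum_mul, ofMul_mul, AddChar.map_add_eq_mul]
  simp only [hχ, sum_comm (t := D), AddChar.sum_apply_eq_ite, ofMul_eq_zero, mul_inv_eq_one,
    sum_ite_eq', Fintype.card_additive]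

theorem sum_charSum_add_sub_mul_apply_inv [Fintype G] [DecidableEq G] (D : Finset G)
    (χ : AddChar (Additive G) ℂ) (h : G) :
    ∑ ψ, (charSum D (χ + ψ) - charSum D ψ) * ψ (.ofMul h⁻¹) =
      (χ (.ofMul h) - 1) * if h ∈ D then (Fintype.card G : ℂ) else 0 := by
  have hshift : ∑ ψ, charSum D (χ + ψ) * ψ (.ofMul h⁻¹) =
      χ (.ofMul h) * ∑ ψ, charSum D ψ * ψ (.ofMul h⁻¹) := by
    rw [← Equiv.sum_comp (Equiv.addLeft χ) fun ψ ↦ charSum D ψ * ψ (.ofMul h⁻¹), mul_sum]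
    refine sum_congr rfl fun ψ _ ↦ ?_
    have hcancel : χ (.ofMul h) * χ (.ofMul h⁻¹) = 1 := by
      rw [← AddChar.map_add_eq_mul, ← ofMul_mul]; simp
    rw [Equiv.coe_addLeft, AddChar.add_apply]
    linear_combination -charSum D (χ + ψ) * ψ (.ofMul h⁻¹) * hcancel
  simp only [sub_mul, sum_sub_distrib, hshift, sum_charSum_mul_apply_inv, one_mul]

theorem exists_charSum_add_ne [Finite G] {D : Finset G} (hD : ∀ g ∈ D, g⁻¹ ∈ D)
    {χ : AddChar (Additive G) ℂ} (hmem : ∃ g ∈ D, χ (.ofMul g) ≠ 1)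
    (hnotMem : ∃ g ∉ D, χ (.ofMul g) ≠ 1) :
    ∃ ψ, ψ ≠ 0 ∧ χ + ψ ≠ 0 ∧ charSum D (χ + ψ) ≠ charSum D ψ := by
  classical
  have := Fintype.ofFinite G
  obtain ⟨g, hg, hχg⟩ := hmem
  obtain ⟨h, hh, hχh⟩ := hnotMem
  have hχ : χ ≠ 0 := by rintro rfl; simp at hχg
  by_contra! hcon
  have hconst (a : G) (ha : χ (.ofMul a) ≠ 1) :
      (if a ∈ D then (Fintype.card G : ℂ) else 0) = #D - charSum D χ := by
    refine mul_left_cancel₀ (sub_ne_zero.mpr ha) ?_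
    rw [← sum_charSum_add_sub_mul_apply_inv,
      Fintype.sum_eq_add 0 (-χ) (neg_ne_zero.mpr hχ).symm fun ψ hψ ↦ by
        rw [hcon ψ hψ.1 (mt neg_eq_of_add_eq_zero_right hψ.2.symm), sub_self, zero_mul]]
    simp only [add_zero, charSum_zero, ofMul_inv, AddChar.zero_apply, mul_one, add_neg_cancel,
      charSum_neg hD, AddChar.neg_apply, neg_neg]
    ring
  have := (hconst g hχg).trans (hconst h hχh).symm
  simp [hg, hh] at this

open scoped Classical in
/-- The nontrivial characters whose sum over `D` is `θ`. For a partial difference set with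
eigenvalue `θ` this is the dual partial difference set of Delsarte. -/
noncomputable def dualSet [Finite G] (D : Finset G) (θ : ℂ) : Finset (AddChar (Additive G) ℂ) :=
  {χ | χ ≠ 0 ∧ charSum D χ = θ}

theorem neg_card_eq_mul_sum_dualSet [Fintype G] {D : Finset G} {s t : ℂ}
    (htwo : ∀ χ ≠ 0, charSum D χ = t ∨ charSum D χ = t + s) {x y : G} (hy : y ∈ D)
    (hy1 : y ≠ 1) (hxy : x * y ∉ D) (hxy1 : x * y ≠ 1) :
    -(Fintype.card G : ℂ) =
      s * ∑ χ ∈ dualSet D (t + s), (χ (.ofMul x⁻¹) - 1) * χ (.ofMul y⁻¹) := by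
  classical
  have hinv (h : G) (h1 : h ≠ 1) : ∑ χ, (charSum D χ - t) * χ (.ofMul h⁻¹) =
      if h ∈ D then (Fintype.card G : ℂ) else 0 := by
    simp only [sub_mul, sum_sub_distrib, sum_charSum_mul_apply_inv, ← mul_sum,
      AddChar.sum_apply_eq_ite, ofMul_eq_zero, inv_eq_one, h1, if_false, mul_zero, sub_zero]
  have hsub := congrArg₂ (· - ·) (hinv _ hxy1) (hinv y hy1)
  simp only [hy, hxy, if_true, if_false, zero_sub, ← sum_sub_distrib] at hsub
  rw [← hsub, dualSet, sum_filter, mul_sum]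
  refine sum_congr rfl fun χ _ ↦ ?_
  rw [mul_inv, ofMul_mul, AddChar.map_add_eq_mul]
  rcases eq_or_ne χ 0 with rfl | hχ
  · simp
  rcases htwo χ hχ with hs | hs
  · rcases eq_or_ne s 0 with rfl | hs0
    · simp [hs]
    · simp [hs, hs0]
  · rw [if_pos ⟨hχ, hs⟩, hs]
    ring

end CharacterSums

namespace IsPDS

variable {G : Type*} {D : Finset G} {v k lam mu : ℕ}

theorem card_filter_offDiag [Group G] [DecidableEq G] (hpds : IsPDS (D : Set G) v k lam mu)
    (z : G) :
    #{p ∈ D.offDiag | p.1 * p.2⁻¹ = z} = if z = 1 then 0 else if z ∈ D then lam else mu := by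
  obtain ⟨-, -, hlam, hmu⟩ := hpds
  have hcard : #{p ∈ D.offDiag | p.1 * p.2⁻¹ = z} =
      {p : G × G | p.1 ∈ D ∧ p.2 ∈ D ∧ p.1 ≠ p.2 ∧ p.1 * p.2⁻¹ = z}.ncard := by
    rw [← Set.ncard_coe_finset]
    congr 1
    ext p
    simp [and_assoc]
  split_ifs with hz1 hzD
  · simp +contextual [hz1, mul_inv_eq_one, filter_eq_empty_iff]
  · exact hcard.trans (hlam z hz1 hzD)
  · exact hcard.trans (hmu z hz1 hzD)

theorem sum_map_sq [Group G] [Fintype G] {R : Type*} [CommRing R]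
    (hpds : IsPDS (D : Set G) v k lam mu) (hreg : IsRegularPDS (D : Set G)) (φ : G →* R) :
    (∑ g ∈ D, φ g) ^ 2 =
      ((k : R) - mu) + ((lam : R) - mu) * ∑ g ∈ D, φ g + mu * ∑ g, φ g := by
  classical
  have hk : #D = k := by simpa using hpds.2.1
  have hinv : ∑ g ∈ D, φ g = ∑ g ∈ D, φ g⁻¹ :=
    sum_nbij' (·⁻¹) (·⁻¹) hreg.2 hreg.2 (by simp) (by simp) (by simp)
  have hfiber (z : G) : ∑ p ∈ D.offDiag with p.1 * p.2⁻¹ = z, φ z =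
      mu * φ z + ((lam : R) - mu) * (if z ∈ D then φ z else 0) - if z = 1 then (mu : R) else 0 := by
    rw [sum_const, hpds.card_filter_offDiag, nsmul_eq_mul]
    rcases eq_or_ne z 1 with rfl | hz
    · simp [show (1 : G) ∉ D from hreg.1]
    · by_cases hzD : z ∈ D <;> simp [hz, hzD, sub_mul]
  calc (∑ g ∈ D, φ g) ^ 2
      = ∑ p ∈ D ×ˢ D, φ (p.1 * p.2⁻¹) := by
        rw [sq]
        nth_rw 2 [hinv]
        simp only [sum_mul_sum, sum_product, map_mul]
    _ = k + ∑ p ∈ D.offDiag, φ (p.1 * p.2⁻¹) := by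
        rw [← diag_union_offDiag, sum_union (disjoint_diag_offDiag D), sum_diag]
        simp [hk]
    _ = ((k : R) - mu) + ((lam : R) - mu) * ∑ g ∈ D, φ g + mu * ∑ g, φ g := by
        rw [← sum_fiberwise' D.offDiag (fun p ↦ p.1 * p.2⁻¹) φ]
        simp only [hfiber, sum_sub_distrib, sum_add_distrib, ← mul_sum, sum_ite_mem, univ_inter,
          sum_ite_eq', mem_univ, if_true]
        ring

variable [CommGroup G]

theorem charSum_sq [Finite G] (hpds : IsPDS (D : Set G) v k lam mu)
    (hreg : IsRegularPDS (D : Set G)) {χ : AddChar (Additive G) ℂ} (hχ : χ ≠ 0) :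
    charSum D χ ^ 2 = ((k : ℂ) - mu) + ((lam : ℂ) - mu) * charSum D χ := by
  have := Fintype.ofFinite G
  have hsum : ∑ g : G, χ (.ofMul g) = 0 :=
    (Additive.ofMul.sum_comp χ).trans (AddChar.sum_eq_zero_iff_ne_zero.mpr hχ)
  have hsq := hpds.sum_map_sq hreg
    (χ.toMonoidHom.comp (MulEquiv.multiplicativeAdditive G).symm.toMonoidHom)
  change charSum D χ ^ 2 = _ + _ * charSum D χ + _ * ∑ g : G, χ (.ofMul g) at hsq
  rw [hsq, hsum, mul_zero, add_zero]

theorem charSum_eq_or_eq [Finite G] (hpds : IsPDS (D : Set G) v k lam mu)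
    (hreg : IsRegularPDS (D : Set G)) {s : ℂ}
    (hs : s ^ 2 = ((lam : ℂ) - mu) ^ 2 + 4 * ((k : ℂ) - mu))
    (χ : AddChar (Additive G) ℂ) (hχ : χ ≠ 0) :
    charSum D χ = ((lam : ℂ) - mu - s) / 2 ∨ charSum D χ = ((lam : ℂ) - mu - s) / 2 + s := by
  rw [← sub_eq_zero, ← sub_eq_zero (b := _ + s), ← mul_eq_zero]
  linear_combination hpds.charSum_sq hreg hχ - hs / 4

theorem exists_sq_charSum_add_sub_eq [Finite G] {s t : ℂ} {Δ : ℤ}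
    (hpds : IsPDS (D : Set G) v k lam mu) (hreg : IsRegularPDS (D : Set G))
    (hnt : ¬ IsTrivialPDS (D : Set G)) (hs : s ^ 2 = Δ)
    (htwo : ∀ χ ≠ 0, charSum D χ = t ∨ charSum D χ = t + s) {χ : AddChar (Additive G) ℂ}
    (hχ : χ ≠ 0) : ∃ ψ, (charSum D (χ + ψ) - charSum D ψ) ^ 2 = Δ := by
  let φ : G →* ℂ := χ.toMonoidHom.comp (MulEquiv.multiplicativeAdditive G).symm.toMonoidHom
  have hφ : φ ≠ 1 := fun h ↦ hχ (DFunLike.ext _ _ fun a ↦ DFunLike.congr_fun h a.toMul)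
  obtain ⟨ψ, hψ, hχψ, hne⟩ := exists_charSum_add_ne hreg.2
    (hpds.exists_mem_apply_ne_one hreg hnt hφ) (hpds.exists_notMem_apply_ne_one hreg hnt hφ)
  refine ⟨ψ, hs ▸ ?_⟩
  rcases htwo _ hχψ with h₁ | h₁ <;> rcases htwo ψ hψ with h₂ | h₂ <;>
    rw [h₁, h₂] at hne ⊢
  all_goals first | exact absurd rfl hne | ring

section Duality

variable [Fintype G] {s t : ℂ} {Δ : ℤ}

theorem exists_card_sq_eq_mul_sq (hpds : IsPDS (D : Set G) v k lam mu)
    (hreg : IsRegularPDS (D : Set G)) (hnt : ¬ IsTrivialPDS (D : Set G)) (hs : s ^ 2 = Δ)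
    (htwo : ∀ χ ≠ 0, charSum D χ = t ∨ charSum D χ = t + s) {x : G} (hx : x ≠ 1) :
    ∃ y : G, (Fintype.card G : ℂ) ^ 2 =
      Δ * (∑ χ ∈ dualSet D (t + s), (χ (.ofMul x) - 1) * χ (.ofMul y)) ^ 2 := by
  obtain ⟨y, hy, hxy1, hxy⟩ := hpds.exists_mem_mul_notMem hreg hnt (inv_ne_one.mpr hx)
  have hcard := neg_card_eq_mul_sum_dualSet htwo hy (hreg.ne_one hy) hxy hxy1
  rw [inv_inv] at hcard
  exact ⟨y⁻¹, by rw [← neg_sq, hcard, mul_pow, hs]⟩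

theorem dvd_card_sq (hpds : IsPDS (D : Set G) v k lam mu)
    (hreg : IsRegularPDS (D : Set G)) (hnt : ¬ IsTrivialPDS (D : Set G)) (hs : s ^ 2 = Δ)
    (htwo : ∀ χ ≠ 0, charSum D χ = t ∨ charSum D χ = t + s) :
    Δ ∣ (Fintype.card G : ℤ) ^ 2 := by
  have := hreg.nontrivial_of_not_isTrivialPDS hnt
  obtain ⟨x, hx⟩ := exists_ne (1 : G)
  obtain ⟨y, hy⟩ := hpds.exists_card_sq_eq_mul_sq hreg hnt hs htwo hx
  have hint : IsIntegral ℤ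
      ((∑ χ ∈ dualSet D (t + s), (χ (.ofMul x) - 1) * χ (.ofMul y)) ^ 2) :=
    .pow (.sum _ fun χ _ ↦ ((isIntegral_addChar_apply χ _).sub isIntegral_one).mul
      (isIntegral_addChar_apply χ _)) 2
  obtain ⟨n, hn⟩ := exists_intCast_eq_of_eq_mul (b := (Fintype.card G : ℤ) ^ 2)
    (pow_ne_zero 2 (Nat.cast_ne_zero.mpr Fintype.card_ne_zero)) (by exact_mod_cast hy) hint
  exact ⟨n, by rw [← hn] at hy; exact_mod_cast hy⟩

theorem dvd_of_card_sq_eq_mul_of_prime_dvd_card (hpds : IsPDS (D : Set G) v k lam mu)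
    (hreg : IsRegularPDS (D : Set G)) (hnt : ¬ IsTrivialPDS (D : Set G)) (hs : s ^ 2 = Δ)
    (htwo : ∀ χ ≠ 0, charSum D χ = t ∨ charSum D χ = t + s) {n : ℤ}
    (hn : (Fintype.card G : ℤ) ^ 2 = Δ * n) {p : ℕ} (hp : p.Prime) (hpG : p ∣ Fintype.card G) :
    (p : ℤ) ∣ n := by
  have := Fact.mk hp
  obtain ⟨x, hx⟩ := exists_prime_orderOf_dvd_card p hpG
  have hx1 : x ≠ 1 := orderOf_eq_one_iff.not.mp (hx ▸ hp.ne_one)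
  obtain ⟨y, hy⟩ := hpds.exists_card_sq_eq_mul_sq hreg hnt hs htwo hx1
  have hΔ : (Δ : ℂ) ≠ 0 :=
    left_ne_zero_of_mul (hy ▸ pow_ne_zero 2 (Nat.cast_ne_zero.mpr Fintype.card_ne_zero))
  refine natCast_dvd_of_sum_sub_one_mul_pow_eq hp two_ne_zero (fun χ ↦ ?_)
    (fun χ ↦ isIntegral_addChar_apply χ _) (mul_left_cancel₀ hΔ (hy.symm.trans ?_))
  · rw [← AddChar.map_nsmul_eq_pow, ← ofMul_pow, ← hx, pow_orderOf_eq_one, ofMul_one,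
      AddChar.map_zero_eq_one]
  · exact_mod_cast hn

theorem dvd_of_prime_dvd_card (hpds : IsPDS (D : Set G) v k lam mu)
    (hreg : IsRegularPDS (D : Set G)) (hnt : ¬ IsTrivialPDS (D : Set G)) (hs : s ^ 2 = Δ)
    (htwo : ∀ χ ≠ 0, charSum D χ = t ∨ charSum D χ = t + s) {p : ℕ} (hp : p.Prime)
    (hpG : p ∣ Fintype.card G) : (p : ℤ) ∣ Δ := by
  have := Fact.mk hp
  obtain ⟨χ, hχ⟩ := exists_prime_addOrderOf_dvd_card (G := AddChar (Additive G) ℂ) p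
    (by rwa [AddChar.card_eq, Fintype.card_additive])
  have hχ0 : χ ≠ 0 := AddMonoid.addOrderOf_eq_one_iff.not.mp (hχ ▸ hp.ne_one)
  obtain ⟨ψ, hψ⟩ := hpds.exists_sq_charSum_add_sub_eq hreg hnt hs htwo hχ0
  rw [charSum_add_sub] at hψ
  refine natCast_dvd_of_sum_sub_one_mul_pow_eq hp two_ne_zero (fun g ↦ ?_)
    (fun g ↦ isIntegral_addChar_apply ψ _) hψ
  rw [← AddChar.nsmul_apply, ← hχ, addOrderOf_nsmul_eq_zero, AddChar.zero_apply]

end Duality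

end IsPDS

/-- Ma: if `D` is a nontrivial regular `(v,k,λ,μ)` partial difference set
in a finite abelian group `G` and `Δ = (λ-μ)² + 4(k-μ)`, then `Δ ∣ v²` and `v`, `Δ` and
`v²/Δ` have exactly the same prime divisors. -/
theorem same_prime_divisors_v_delta
    (G : Type*) [CommGroup G] [Fintype G] (v k lam mu : ℕ) (D : Set G)
    (hpds : IsPDS D v k lam mu) (hreg : IsRegularPDS D) (hnt : ¬ IsTrivialPDS D)
    (Δ : ℤ) (hΔ : Δ = ((lam : ℤ) - mu) ^ 2 + 4 * ((k : ℤ) - mu)) :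
    Δ ∣ (v : ℤ) ^ 2 ∧
    ∀ q : ℕ, q.Prime →
      (((q : ℤ) ∣ (v : ℤ)) ↔ ((q : ℤ) ∣ Δ)) ∧
      (((q : ℤ) ∣ Δ) ↔ ((q : ℤ) ∣ (v : ℤ) ^ 2 / Δ)) := by
  lift D to Finset G using D.toFinite
  obtain ⟨s, hs⟩ := IsAlgClosed.exists_pow_nat_eq (Δ : ℂ) two_pos
  have htwo := hpds.charSum_eq_or_eq hreg (hs.trans (by rw [hΔ]; push_cast; rfl))
  have hv : v = Fintype.card G := hpds.1.symm.trans Nat.card_eq_fintype_card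
  obtain ⟨n, hn⟩ := hpds.dvd_card_sq hreg hnt hs htwo
  have hΔ0 : Δ ≠ 0 := left_ne_zero_of_mul
    (hn ▸ pow_ne_zero 2 (Nat.cast_ne_zero.mpr Fintype.card_ne_zero))
  rw [hv, hn, Int.mul_ediv_cancel_left n hΔ0]
  refine ⟨dvd_mul_right Δ n, fun q hq ↦ ?_⟩
  have hdvd_card : (q : ℤ) ∣ Δ * n → q ∣ Fintype.card G := fun h ↦
    Int.natCast_dvd_natCast.mp ((Nat.prime_iff_prime_int.mp hq).dvd_of_dvd_pow (hn ▸ h))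
  have hdvd_Δ := hpds.dvd_of_prime_dvd_card hreg hnt hs htwo hq
  have hdvd_n := hpds.dvd_of_card_sq_eq_mul_of_prime_dvd_card hreg hnt hs htwo hn hq
  rw [Int.natCast_dvd_natCast]
  exact ⟨⟨hdvd_Δ, fun h ↦ hdvd_card (h.mul_right n)⟩,
    fun h ↦ hdvd_n (hdvd_card (h.mul_right n)), fun h ↦ hdvd_Δ (hdvd_card (h.mul_left Δ))⟩
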